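/- Let Q be any quiver whose underlying graph is the extended Dynkin diagram Ẽ_8: vertex set {1,2,…,9} with edges {1,2}, {2,3}, {3,4}, {4,5}, {5,9}, {6,9}, {7,8}, {8,9}. Then for every vertex i of Q the frieze sequence (X^i_j)_{j≥0} satisfies a linear recurrence over the field ℚ(x_1,…,x_9). -/

import Mathlib

/-- The (ordered) edge description of the extended Dynkin diagram Ẽ_8 on vertices
`{1,…,9}` : edges `{1,2}, {2,3}, {3,4}, {4,5}, {5,9}, {6,9}, {7,8}, {8,9}`; the vertex labelled
`k ∈ {1,…,9}` corresponds to the index `k−1` of `Fin 9`. -/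
def e8Edge (a b : ℕ) : Prop :=
  (a = 0 ∧ b = 1) ∨ (a = 1 ∧ b = 2) ∨ (a = 2 ∧ b = 3) ∨ (a = 3 ∧ b = 4) ∨
  (a = 4 ∧ b = 8) ∨ (a = 5 ∧ b = 8) ∨ (a = 6 ∧ b = 7) ∨ (a = 7 ∧ b = 8)

/-!
On a tree, reversing an arrow only shifts the frieze sequences on one side of it, so it suffices to
treat the orientation of `Ẽ_8` pointing away from the end of the long arm. The sequences along that
arm then form a Coxeter frieze pattern, hence are continuants in the shifts of its first row `a`.
Pushing the pattern past the branch vertex and cancelling common factors makes the relations of the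
short arms linear and leads to `a (n + 12) = e n * a (n + 6) - a n`, where `e n` has period `5`.

A recurrence with periodic coefficients confines the shifts of `a` to a finitely generated module,
so `a` is linearly recurrent by Cayley–Hamilton. Linearly recurrent sequences form an algebra, and
all the other sequences are polynomials in shifts of `a` and `e`.

The cancellations are legitimate because the recursion is subtraction-free: its values are quotients
of polynomials that are positive at `(1, …, 1)`.
-/

section RecurrentSequences

variable (R : Type*) [CommRing R]

/-- The left shift `(a₀, a₁, …) ↦ (a₁, a₂, …)` of sequences, as an algebra endomorphism. -/
def seqShift : (ℕ → R) →ₐ[R] (ℕ → R) :=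
  AlgHom.pi fun n => Pi.evalAlgHom R _ (n + 1)

variable {R} {a : ℕ → R}

@[simp]
theorem seqShift_apply (n : ℕ) : seqShift R a n = a (n + 1) := rfl

theorem seqShift_comp_add (k : ℕ) :
    (seqShift R fun n => a (n + k)) = fun n => a (n + (k + 1)) := by
  funext n
  exact congrArg a (Nat.succ_add_eq_add_succ n k)

theorem map_seqShift_solSpace_le (E : LinearRecurrence R) :
    E.solSpace.map (seqShift R).toLinearMap ≤ E.solSpace := by
  rintro _ ⟨a, ha, rfl⟩ n
  simpa [Nat.add_right_comm] using ha (n + 1)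

theorem solSpace_fg (E : LinearRecurrence R) : E.solSpace.FG :=
  Module.Finite.iff_fg.mp (Module.Finite.of_basis E.basis)

/-- By Cayley–Hamilton, the shift satisfies a monic polynomial equation on `W`. -/
theorem exists_isSolution_of_mem_fg {W : Submodule R (ℕ → R)} (hW : W.FG)
    (hshift : W.map (seqShift R).toLinearMap ≤ W) (ha : a ∈ W) :
    ∃ E : LinearRecurrence R, E.IsSolution a := by
  have : Module.Finite R W := Module.Finite.iff_fg.mpr hW
  let f : Module.End R W :=
    (seqShift R).toLinearMap.restrict (Submodule.map_le_iff_le_comap.mp hshift)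
  have hf (k : ℕ) : ((f ^ k) ⟨a, ha⟩ : ℕ → R) = fun n => a (n + k) := by
    induction k with
    | zero => rfl
    | succ k ih => rw [pow_succ', ← seqShift_comp_add, ← ih]; rfl
  obtain ⟨p, hp, hfp⟩ := LinearMap.exists_monic_and_aeval_eq_zero R f
  refine ⟨⟨p.natDegree, fun i => -p.coeff i⟩, fun n => ?_⟩
  have hsum : ∑ k ∈ Finset.range (p.natDegree + 1), p.coeff k * a (n + k) = 0 := by
    have := congrArg (fun g : Module.End R W => (g ⟨a, ha⟩ : ℕ → R) n) hfp
    simpa [Polynomial.aeval_eq_sum_range, hf, LinearMap.sum_apply] using this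
  rw [Finset.sum_range_succ, hp.coeff_natDegree, one_mul, Finset.sum_range] at hsum
  simpa using eq_neg_of_add_eq_zero_right hsum

variable (R) in
/-- The algebra of linearly recurrent sequences. -/
def recurrentSequences : Subalgebra R (ℕ → R) where
  carrier := {a | ∃ E : LinearRecurrence R, E.IsSolution a}
  add_mem' := by
    rintro a b ⟨E, ha⟩ ⟨F, hb⟩
    refine exists_isSolution_of_mem_fg ((solSpace_fg E).sup (solSpace_fg F)) ?_
      (Submodule.add_mem_sup ha hb)
    rw [Submodule.map_sup]
    exact sup_le_sup (map_seqShift_solSpace_le E) (map_seqShift_solSpace_le F)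
  mul_mem' := by
    rintro a b ⟨E, ha⟩ ⟨F, hb⟩
    refine exists_isSolution_of_mem_fg ((solSpace_fg E).mul (solSpace_fg F)) ?_
      (Submodule.mul_mem_mul ha hb)
    rw [Submodule.map_mul]
    exact mul_le_mul' (map_seqShift_solSpace_le E) (map_seqShift_solSpace_le F)
  algebraMap_mem' r := ⟨⟨1, 1⟩, fun n => by simp⟩

theorem seqShift_mem_recurrentSequences (ha : a ∈ recurrentSequences R) :
    seqShift R a ∈ recurrentSequences R := by
  obtain ⟨E, ha⟩ := ha
  exact ⟨E, map_seqShift_solSpace_le E (Submodule.mem_map_of_mem ha)⟩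

theorem comp_add_mem_recurrentSequences (ha : a ∈ recurrentSequences R) (k : ℕ) :
    (fun n => a (n + k)) ∈ recurrentSequences R := by
  induction k with
  | zero => exact ha
  | succ k ih => simpa only [seqShift_comp_add] using seqShift_mem_recurrentSequences ih

theorem isSolution_cons_zero {E : LinearRecurrence R} (ha : E.IsSolution (seqShift R a)) :
    (⟨E.order + 1, Fin.cons 0 E.coeffs⟩ : LinearRecurrence R).IsSolution a := fun n => by
  simpa [Fin.sum_univ_succ, add_assoc] using ha n

theorem mem_recurrentSequences_of_comp_add {k : ℕ}
    (ha : (fun n => a (n + k)) ∈ recurrentSequences R) : a ∈ recurrentSequences R := by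
  induction k with
  | zero => exact ha
  | succ k ih =>
    rw [← seqShift_comp_add] at ha
    obtain ⟨E, ha⟩ := ha
    exact ih ⟨_, isSolution_cons_zero ha⟩

theorem exists_recurrence_of_mem_recurrentSequences (ha : a ∈ recurrentSequences R) :
    ∃ s : ℕ, 1 ≤ s ∧ ∃ c : Fin s → R, ∀ n, a (n + s) = ∑ t, c t * a (n + t.val) := by
  obtain ⟨E, ha⟩ := seqShift_mem_recurrentSequences ha
  exact ⟨_, Nat.le_add_left 1 E.order, _, isSolution_cons_zero ha⟩

variable (R) in
/-- The algebra of sequences of period `p`. -/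
def periodicSequences (p : ℕ) : Subalgebra R (ℕ → R) where
  carrier := {c | Function.Periodic c p}
  add_mem' hc hd := hc.add hd
  mul_mem' hc hd := hc.mul hd
  algebraMap_mem' _ _ := rfl

theorem toSubmodule_periodicSequences (p : ℕ) [NeZero p] :
    (periodicSequences R p).toSubmodule =
      (⟨p, Pi.single 0 1⟩ : LinearRecurrence R).solSpace := by
  ext c
  refine forall_congr' fun n => ?_
  simp [Pi.single_apply]

theorem periodicSequences_fg (p : ℕ) [NeZero p] : (periodicSequences R p).toSubmodule.FG := by
  rw [toSubmodule_periodicSequences]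
  exact solSpace_fg _

theorem map_seqShift_periodicSequences_le (p : ℕ) :
    (periodicSequences R p).toSubmodule.map (seqShift R).toLinearMap ≤
      (periodicSequences R p).toSubmodule := by
  rintro _ ⟨c, hc, rfl⟩ n
  simpa [Nat.add_right_comm] using hc (n + 1)

theorem mem_recurrentSequences_of_periodic {p : ℕ} [NeZero p] (ha : Function.Periodic a p) :
    a ∈ recurrentSequences R :=
  ⟨_, (toSubmodule_periodicSequences p).le ha⟩

/-- The shifts of `a` span a finitely generated module over the algebra of `p`-periodic sequences,
which is itself a finitely generated module. -/
theorem mem_recurrentSequences_of_periodic_coeffs {p s : ℕ} [NeZero p] {c : Fin s → ℕ → R}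
    (hc : ∀ t, Function.Periodic (c t) p) (ha : ∀ n, a (n + s) = ∑ t, c t n * a (n + t)) :
    a ∈ recurrentSequences R := by
  let P := (periodicSequences R p).toSubmodule
  let v (k : ℕ) : ℕ → R := fun n => a (n + k)
  let V := Submodule.span R (Set.range fun k : Fin (s + 1) => v k)
  have hPshift : P.map (seqShift R).toLinearMap ≤ P := map_seqShift_periodicSequences_le p
  have hPP : P * P = P := (periodicSequences R p).isIdempotentElem_toSubmodule
  have hv {k : ℕ} (hk : k ≤ s) : v k ∈ V :=
    Submodule.subset_span ⟨⟨k, Nat.lt_succ_iff.mpr hk⟩, rfl⟩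
  have hVP : V ≤ P * V := by
    simpa using mul_le_mul_left (Submodule.one_le.mpr (periodicSequences R p).one_mem) V
  have hv_succ : v (s + 1) ∈ P * V := by
    have : v (s + 1) = ∑ t, seqShift R (c t) * v (t + 1) := by
      funext n
      simpa [v, add_assoc, add_comm, add_left_comm] using ha (n + 1)
    rw [this]
    exact sum_mem fun t _ =>
      Submodule.mul_mem_mul (hPshift (Submodule.mem_map_of_mem (hc t))) (hv t.isLt)
  have hVshift : V.map (seqShift R).toLinearMap ≤ P * V := by
    rw [Submodule.map_span_le]
    rintro _ ⟨k, rfl⟩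
    rw [AlgHom.toLinearMap_apply, seqShift_comp_add]
    obtain hk | hk := (Nat.lt_succ_iff.mp k.isLt).lt_or_eq
    · exact hVP (hv hk)
    · rwa [hk]
  refine exists_isSolution_of_mem_fg (W := P * V)
    ((periodicSequences_fg p).mul (Submodule.fg_span (Set.finite_range _))) ?_
    (hVP (hv (Nat.zero_le s)))
  calc (P * V).map (seqShift R).toLinearMap
      = P.map (seqShift R).toLinearMap * V.map (seqShift R).toLinearMap := Submodule.map_mul _ _ _
    _ ≤ P * (P * V) := mul_le_mul' hPshift hVshift
    _ = P * V := by rw [← mul_assoc, hPP]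

end RecurrentSequences

section FriezePatterns

variable {R : Type*} [CommRing R]

/-- Rows `x 0, x 1, …, x (m + 1)` of a Coxeter frieze pattern: `x 0` is constant equal to `1`,
neighbouring entries satisfy the diamond rule, and `x 0, …, x m` do not vanish. -/
structure IsFriezePattern (m : ℕ) (x : ℕ → ℕ → R) : Prop where
  zero (n : ℕ) : x 0 n = 1
  ne_zero {k : ℕ} (hk : k ≤ m) (n : ℕ) : x k n ≠ 0
  diamond {k : ℕ} (hk : k < m) (n : ℕ) :
    x (k + 1) (n + 1) * x (k + 1) n = 1 + x k (n + 1) * x (k + 2) n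

theorem eq_mul_sub_of_diamonds_right [IsDomain R] {p p' q q' r s t : R} (hp : p ≠ 0)
    (hq : q' = t * p - s) (h₁ : p * p' = 1 + s * q)
    (h₂ : q' * q = 1 + p * r) : r = t * q - p' := by
  apply mul_left_cancel₀ hp
  linear_combination -h₂ + h₁ + q * hq

theorem eq_mul_sub_of_diamonds_left [IsDomain R] {p p' q q' r s t : R} (hp : p ≠ 0)
    (hq : q = t * p - s) (h₁ : p' * p = 1 + s * q')
    (h₂ : q' * q = 1 + p * r) : r = t * q' - p' := by
  apply mul_left_cancel₀ hp
  linear_combination -h₂ + h₁ + q' * hq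

namespace IsFriezePattern

variable {m : ℕ} {x : ℕ → ℕ → R}

theorem row_two (h : IsFriezePattern m x) (hm : 0 < m) (n : ℕ) :
    x 2 n = x 1 (n + 1) * x 1 n - 1 := by
  linear_combination -h.diamond hm n - x 2 n * h.zero (n + 1)

variable [IsDomain R]

theorem row_add_two_right (h : IsFriezePattern m x) {k : ℕ} (hk : k < m) (n : ℕ) :
    x (k + 2) n = x 1 (n + (k + 1)) * x (k + 1) n - x k n := by
  induction k generalizing n with
  | zero => rw [h.zero, h.row_two hk]
  | succ k ih =>
    have hk' : k < m := by omega
    have hrow : x (k + 2) (n + 1) = x 1 (n + (k + 2)) * x (k + 1) (n + 1) - x k (n + 1) := by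
      rw [ih hk', Nat.succ_add_eq_add_succ]
    exact eq_mul_sub_of_diamonds_right (h.ne_zero hk' (n + 1)) hrow (h.diamond hk' n)
      (h.diamond hk n)

theorem row_add_two_left (h : IsFriezePattern m x) {k : ℕ} (hk : k < m) (n : ℕ) :
    x (k + 2) n = x 1 n * x (k + 1) (n + 1) - x k (n + 2) := by
  induction k with
  | zero => rw [h.zero, h.row_two hk, mul_comm]
  | succ k ih =>
    have hk' : k < m := by omega
    exact eq_mul_sub_of_diamonds_left (h.ne_zero hk' (n + 1)) (ih hk') (h.diamond hk' (n + 1))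
      (h.diamond hk n)

theorem row_mem_recurrentSequences (h : IsFriezePattern m x) (h₁ : x 1 ∈ recurrentSequences R)
    {k : ℕ} (hk : k ≤ m + 1) : x k ∈ recurrentSequences R := by
  induction k using Nat.twoStepInduction with
  | zero => exact (funext h.zero : x 0 = 1) ▸ one_mem _
  | one => exact h₁
  | more k ih ih' =>
    rw [funext (h.row_add_two_right (Nat.lt_of_succ_le (Nat.le_of_succ_le_succ hk)))]
    exact sub_mem (mul_mem (comp_add_mem_recurrentSequences h₁ (k + 1)) (ih' (by omega)))
      (ih (by omega))

end IsFriezePattern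

end FriezePatterns

/-- Sequences satisfying the frieze relations of `Ẽ_8` for the orientation pointing away from the
end of the long arm. The vertices of the long arm, from its end to the branch vertex, are
`x 1, …, x 6`, so `x 0 = 1` and `x 7 = z * w` complete them to a frieze pattern; the two short arms
at the branch vertex are `x 6 — z` and `x 6 — w — b`. -/
structure IsE8Frieze {R : Type*} [CommRing R] (x : ℕ → ℕ → R) (z w b : ℕ → R) : Prop where
  pattern : IsFriezePattern 6 x
  x_seven (n : ℕ) : x 7 n = z n * w n
  z_ne_zero (n : ℕ) : z n ≠ 0
  w_ne_zero (n : ℕ) : w n ≠ 0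
  b_ne_zero (n : ℕ) : b n ≠ 0
  z_mul_z (n : ℕ) : z (n + 1) * z n = 1 + x 6 (n + 1)
  w_mul_w (n : ℕ) : w (n + 1) * w n = 1 + x 6 (n + 1) * b n
  b_mul_b (n : ℕ) : b (n + 1) * b n = 1 + w (n + 1)

namespace IsE8Frieze

variable {R : Type*} [CommRing R] {x : ℕ → ℕ → R} {z w b : ℕ → R}

theorem x₆_mul_x₆ (h : IsE8Frieze x z w b) (n : ℕ) :
    x 6 (n + 1) * x 6 n = 1 + x 5 (n + 1) * (z n * w n) := by
  rw [← h.x_seven]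
  exact h.pattern.diamond (by norm_num) n

theorem x₇_mul_x₇ (h : IsE8Frieze x z w b) (n : ℕ) :
    x 7 (n + 1) * x 7 n = 1 + x 6 (n + 1) * (1 + b n + b n * x 6 (n + 1)) := by
  rw [h.x_seven, h.x_seven]
  linear_combination (w (n + 1) * w n) * h.z_mul_z n + (1 + x 6 (n + 1)) * h.w_mul_w n

variable [IsDomain R]

theorem x₁_mul_w_right (h : IsE8Frieze x z w b) (n : ℕ) :
    x 1 (n + 8) * w (n + 1) = z n + b (n + 1) * z (n + 2) := by
  have x₈ : 1 + b (n + 1) + b (n + 1) * x 6 (n + 2) = x 1 (n + 8) * x 7 (n + 1) - x 6 (n + 1) :=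
    eq_mul_sub_of_diamonds_right (h.pattern.ne_zero le_rfl (n + 2))
      (h.pattern.row_add_two_right (k := 5) (by norm_num) (n + 2))
      (h.pattern.diamond (k := 5) (by norm_num) (n + 1)) (h.x₇_mul_x₇ (n + 1))
  apply mul_left_cancel₀ (h.z_ne_zero (n + 1))
  linear_combination -x₈ - x 1 (n + 8) * h.x_seven (n + 1) - h.z_mul_z n -
    b (n + 1) * h.z_mul_z (n + 1)

theorem x₁_mul_w_left (h : IsE8Frieze x z w b) (n : ℕ) :
    x 1 n * w (n + 1) = z (n + 2) + b n * z n := by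
  have x₈ : 1 + b n + b n * x 6 (n + 1) = x 1 n * x 7 (n + 1) - x 6 (n + 2) :=
    eq_mul_sub_of_diamonds_left (h.pattern.ne_zero le_rfl (n + 1))
      (h.pattern.row_add_two_left (k := 5) (by norm_num) n)
      (h.pattern.diamond (k := 5) (by norm_num) (n + 1)) (h.x₇_mul_x₇ n)
  apply mul_left_cancel₀ (h.z_ne_zero (n + 1))
  linear_combination -x₈ - x 1 n * h.x_seven (n + 1) - b n * h.z_mul_z n - h.z_mul_z (n + 1)

theorem z_eq (h : IsE8Frieze x z w b) (n : ℕ) :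
    z n = x 1 n * b (n + 1) - x 1 (n + 8) := by
  apply mul_left_cancel₀ (h.w_ne_zero (n + 1))
  linear_combination h.x₁_mul_w_right n - b (n + 1) * h.x₁_mul_w_left n - z n * h.b_mul_b n

theorem z_add_two (h : IsE8Frieze x z w b) (n : ℕ) :
    z (n + 2) = x 1 (n + 8) * b n - x 1 n := by
  linear_combination -h.x₁_mul_w_left n - b n * h.z_eq n - x 1 n * h.b_mul_b n

theorem b_mul_w_right (h : IsE8Frieze x z w b) (n : ℕ) :
    b n * w (n + 2) = x 6 (n + 2) + b (n + 2) := by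
  apply mul_left_cancel₀ (h.b_ne_zero (n + 1))
  linear_combination w (n + 2) * h.b_mul_b n - h.b_mul_b (n + 1) + h.w_mul_w (n + 1)

theorem b_mul_w_left (h : IsE8Frieze x z w b) (n : ℕ) :
    b (n + 2) * w (n + 1) = x 6 (n + 2) + b n := by
  apply mul_left_cancel₀ (h.b_ne_zero (n + 1))
  linear_combination w (n + 1) * h.b_mul_b (n + 1) - h.b_mul_b n + h.w_mul_w (n + 1)

theorem x₁_mul_z_left (h : IsE8Frieze x z w b) (n : ℕ) :
    x 1 (n + 1) * z (n + 2) = w (n + 1) + b (n + 3) := by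
  apply mul_left_cancel₀ (h.w_ne_zero (n + 2))
  linear_combination z (n + 2) * h.x₁_mul_w_left (n + 1) + h.z_mul_z (n + 2) +
    b (n + 1) * h.z_mul_z (n + 1) - h.w_mul_w (n + 1) - h.b_mul_w_left (n + 1)

theorem x₁_mul_z_right (h : IsE8Frieze x z w b) (n : ℕ) :
    x 1 (n + 9) * z (n + 2) = w (n + 3) + b n := by
  apply mul_left_cancel₀ (h.w_ne_zero (n + 2))
  linear_combination z (n + 2) * h.x₁_mul_w_right (n + 1) + h.z_mul_z (n + 1) +
    b (n + 2) * h.z_mul_z (n + 2) - h.w_mul_w (n + 2) - h.b_mul_w_right n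

theorem b_mul_x₆_right (h : IsE8Frieze x z w b) (n : ℕ) :
    b n * x 6 (n + 3) = z (n + 2) * x 5 (n + 3) + w (n + 3) := by
  apply mul_left_cancel₀ (h.w_ne_zero (n + 2))
  linear_combination x 6 (n + 3) * h.b_mul_w_right n + h.x₆_mul_x₆ (n + 2) - h.w_mul_w (n + 2)

theorem b_mul_x₆_left (h : IsE8Frieze x z w b) (n : ℕ) :
    b (n + 2) * x 6 (n + 1) = z (n + 1) * x 5 (n + 2) + w n := by
  apply mul_left_cancel₀ (h.w_ne_zero (n + 1))
  linear_combination x 6 (n + 1) * h.b_mul_w_left n + h.x₆_mul_x₆ (n + 1) - h.w_mul_w n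

theorem b_mul_x₆_add (h : IsE8Frieze x z w b) (n : ℕ) :
    b n * x 6 (n + 3) + b (n + 5) = z (n + 2) * x 5 (n + 3) + z (n + 4) * x 1 (n + 3) := by
  linear_combination h.b_mul_x₆_right n - h.x₁_mul_z_left (n + 2)

theorem b_mul_x₅ (h : IsE8Frieze x z w b) (n : ℕ) :
    b n * x 5 (n + 4) = z (n + 2) * x 4 (n + 4) + z (n + 4) := by
  have x₇_right := h.pattern.row_add_two_right (k := 5) (by norm_num) (n + 3)
  have x₇_left := h.pattern.row_add_two_left (k := 5) (by norm_num) (n + 3)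
  have x₆_right := h.pattern.row_add_two_right (k := 4) (by norm_num) (n + 4)
  have x₅_mul_x₅ := h.pattern.diamond (k := 4) (by norm_num) (n + 3)
  apply mul_left_cancel₀ (mul_ne_zero (h.z_ne_zero (n + 3)) (h.w_ne_zero (n + 3)))
  linear_combination x 6 (n + 4) * h.b_mul_x₆_add n - h.b_mul_x₆_left (n + 3) +
    h.x₁_mul_z_right n - b n * h.x₆_mul_x₆ (n + 3) - z (n + 4) * (x₇_left - h.x_seven (n + 3)) +
    z (n + 2) * (x 5 (n + 3) * x₆_right + x 1 (n + 9) * x₅_mul_x₅ -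
      x 4 (n + 4) * (x₇_right - h.x_seven (n + 3)))

theorem b_mul_x₄ (h : IsE8Frieze x z w b) (n : ℕ) :
    b n * x 4 (n + 5) = z (n + 2) * x 3 (n + 5) + b (n + 5) := by
  have x₆_left := h.pattern.row_add_two_left (k := 4) (by norm_num) (n + 3)
  have x₅_left := h.pattern.row_add_two_left (k := 3) (by norm_num) (n + 3)
  linear_combination x 1 (n + 3) * h.b_mul_x₅ n - h.b_mul_x₆_add n + b n * x₆_left -
    z (n + 2) * x₅_left

theorem b_mul_x₃ (h : IsE8Frieze x z w b) (n : ℕ) :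
    b n * x 3 (n + 6) = z (n + 2) * x 2 (n + 6) + b (n + 5) * x 1 (n + 4) - z (n + 4) := by
  have x₅_left := h.pattern.row_add_two_left (k := 3) (by norm_num) (n + 4)
  have x₄_left := h.pattern.row_add_two_left (k := 2) (by norm_num) (n + 4)
  linear_combination x 1 (n + 4) * h.b_mul_x₄ n - h.b_mul_x₅ n + b n * x₅_left -
    z (n + 2) * x₄_left

theorem b_mul_x₂ (h : IsE8Frieze x z w b) (n : ℕ) :
    b n * x 2 (n + 7) =
      z (n + 2) * x 1 (n + 7) + b (n + 5) * x 2 (n + 4) - z (n + 4) * x 1 (n + 5) := by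
  have x₄_left := h.pattern.row_add_two_left (k := 2) (by norm_num) (n + 5)
  have x₃_left := h.pattern.row_add_two_left (k := 1) (by norm_num) (n + 5)
  have x₂_eq := h.pattern.row_two (by norm_num) (n + 4)
  linear_combination x 1 (n + 5) * h.b_mul_x₃ n - h.b_mul_x₄ n + b n * x₄_left -
    z (n + 2) * x₃_left - b (n + 5) * x₂_eq

/-- The sequence `x 1 n * x 1 (n + 7) - b n` is attached to the tube of rank five of `Ẽ_8`. -/
theorem periodic_x₁_mul_x₁_sub_b (h : IsE8Frieze x z w b) :
    Function.Periodic (fun n => x 1 n * x 1 (n + 7) - b n) 5 := fun n => by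
  have x₂_eq := h.pattern.row_two (by norm_num)
  linear_combination b n * x₂_eq (n + 7) - b (n + 5) * x₂_eq (n + 4) - h.b_mul_x₂ n -
    x 1 (n + 7) * h.z_add_two n + x 1 (n + 5) * h.z_eq (n + 4)

theorem x₁_add_twelve (h : IsE8Frieze x z w b) (n : ℕ) :
    x 1 (n + 12) = (x 1 n * x 1 (n + 7) - b n) * x 1 (n + 6) - x 1 n := by
  have x₃_right := h.pattern.row_add_two_right (k := 1) (by norm_num) (n + 6)
  have x₂_eq := h.pattern.row_two (by norm_num) (n + 6)
  linear_combination -h.b_mul_x₃ n + b n * x₃_right - x 2 (n + 6) * h.z_add_two n +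
    h.z_eq (n + 4) + x 1 n * x₂_eq

theorem x₁_mem_recurrentSequences (h : IsE8Frieze x z w b) : x 1 ∈ recurrentSequences R := by
  let e (n : ℕ) : R := x 1 n * x 1 (n + 7) - b n
  let c (t : Fin 12) : ℕ → R := (if t = 6 then e else 0) - if t = 0 then 1 else 0
  refine mem_recurrentSequences_of_periodic_coeffs (p := 5) (c := c) (fun t => ?_) fun n => ?_
  · have he : (if t = 6 then e else 0).Periodic 5 := by
      split_ifs
      exacts [h.periodic_x₁_mul_x₁_sub_b, fun _ => rfl]
    exact he.sub fun _ => by split_ifs <;> rfl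
  · simp [c, e, h.x₁_add_twelve, sub_mul, ite_apply]

theorem x_mem_recurrentSequences (h : IsE8Frieze x z w b) {k : ℕ} (hk : k ≤ 6) :
    x k ∈ recurrentSequences R :=
  h.pattern.row_mem_recurrentSequences h.x₁_mem_recurrentSequences (by omega)

theorem b_mem_recurrentSequences (h : IsE8Frieze x z w b) : b ∈ recurrentSequences R := by
  have hx := h.x₁_mem_recurrentSequences
  have hb : b = x 1 * (fun n => x 1 (n + 7)) - fun n => x 1 n * x 1 (n + 7) - b n := by
    funext n
    simp
  rw [hb]
  exact sub_mem (mul_mem hx (comp_add_mem_recurrentSequences hx 7))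
    (mem_recurrentSequences_of_periodic h.periodic_x₁_mul_x₁_sub_b)

theorem z_mem_recurrentSequences (h : IsE8Frieze x z w b) : z ∈ recurrentSequences R := by
  have hx := h.x₁_mem_recurrentSequences
  rw [funext h.z_eq]
  exact sub_mem (mul_mem hx (comp_add_mem_recurrentSequences h.b_mem_recurrentSequences 1))
    (comp_add_mem_recurrentSequences hx 8)

theorem w_mem_recurrentSequences (h : IsE8Frieze x z w b) : w ∈ recurrentSequences R := by
  have hb := h.b_mem_recurrentSequences
  have hw : (fun n => w (n + 1)) = (fun n => b (n + 1)) * b - 1 :=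
    funext fun n => eq_sub_of_add_eq' (h.b_mul_b n).symm
  apply mem_recurrentSequences_of_comp_add (k := 1)
  rw [hw]
  exact sub_mem (mul_mem (comp_add_mem_recurrentSequences hb 1) hb) (one_mem _)

end IsE8Frieze

section PositiveFractions

variable {A k : Type*} [CommRing A] [CommRing k] [PartialOrder k] [IsStrictOrderedRing k]

/-- The elements of an `A`-algebra `K` that are quotients of elements of `A` at which `φ : A → k`
is positive. It is closed under the subtraction-free operations and does not contain `0`. -/
def positiveFractions (φ : A →+* k) (K : Type*) [CommRing K] [Algebra A K] : Submonoid K where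
  carrier := {x | ∃ p q, 0 < φ p ∧ 0 < φ q ∧ x * algebraMap A K q = algebraMap A K p}
  one_mem' := ⟨1, 1, by simp, by simp, by simp⟩
  mul_mem' := by
    rintro x y ⟨p, q, hp, hq, hx⟩ ⟨p', q', hp', hq', hy⟩
    refine ⟨p * p', q * q', by simpa using mul_pos hp hp', by simpa using mul_pos hq hq', ?_⟩
    rw [map_mul, map_mul, ← hx, ← hy, mul_mul_mul_comm]

namespace positiveFractions

variable {φ : A →+* k} {K : Type*} [CommRing K] [Algebra A K] {x y : K}

theorem algebraMap_mem {p : A} (hp : 0 < φ p) : algebraMap A K p ∈ positiveFractions φ K :=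
  ⟨p, 1, hp, by simp, by simp⟩

theorem add_mem (hx : x ∈ positiveFractions φ K) (hy : y ∈ positiveFractions φ K) :
    x + y ∈ positiveFractions φ K := by
  obtain ⟨p, q, hp, hq, hx⟩ := hx
  obtain ⟨p', q', hp', hq', hy⟩ := hy
  refine ⟨p * q' + p' * q, q * q', ?_, by simpa using mul_pos hq hq', ?_⟩
  · simpa using add_pos (mul_pos hp hq') (mul_pos hp' hq)
  · simp only [map_mul, map_add, ← hx, ← hy]
    ring

theorem mem_of_mul_mem (hxy : x * y ∈ positiveFractions φ K) (hy : y ∈ positiveFractions φ K) :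
    x ∈ positiveFractions φ K := by
  obtain ⟨p, q, hp, hq, hxy⟩ := hxy
  obtain ⟨p', q', hp', hq', hy⟩ := hy
  refine ⟨p * q', q * p', by simpa using mul_pos hp hq', by simpa using mul_pos hq hp', ?_⟩
  simp only [map_mul, ← hxy, ← hy]
  ring

theorem ne_zero [FaithfulSMul A K] (hx : x ∈ positiveFractions φ K) : x ≠ 0 := by
  rintro rfl
  obtain ⟨p, q, hp, -, h⟩ := hx
  rw [zero_mul, eq_comm, FaithfulSMul.algebraMap_eq_zero_iff] at h
  simp [h] at hp

end positiveFractions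

end PositiveFractions

/-- The frieze relations of the quiver with vertex set `V` and `mult u v` arrows from `u` to `v`. -/
def IsFrieze {V R : Type*} [Fintype V] [CommSemiring R] (mult : V → V → ℕ) (X : V → ℕ → R) : Prop :=
  ∀ v j, X v (j + 1) * X v j =
    1 + (∏ s, X s (j + 1) ^ mult s v) * ∏ d, X d j ^ mult v d

namespace IsFrieze

variable {V : Type*} [Fintype V] {mult : V → V → ℕ}

theorem mem_positiveFractions {A k K : Type*} [CommRing A] [CommRing k] [PartialOrder k]
    [IsStrictOrderedRing k] [CommRing K] [Algebra A K] {φ : A →+* k} {X : V → ℕ → K}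
    (hX : IsFrieze mult X) (hacyclic : WellFounded fun u v => mult u v ≠ 0)
    (h₀ : ∀ v, X v 0 ∈ positiveFractions φ K) (v : V) (j : ℕ) :
    X v j ∈ positiveFractions φ K := by
  induction j generalizing v with
  | zero => exact h₀ v
  | succ j ih =>
    induction v using hacyclic.induction with
    | _ v ihv =>
      refine positiveFractions.mem_of_mul_mem ?_ (ih v)
      rw [hX]
      refine positiveFractions.add_mem (one_mem _)
        (mul_mem (prod_mem fun s _ => ?_) (prod_mem fun d _ => pow_mem (ih d) _))
      obtain hs | hs := eq_or_ne (mult s v) 0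
      · simp [hs]
      · exact pow_mem (ihv s hs) _

theorem ne_zero_of_initial_eq_X {X : V → ℕ → FractionRing (MvPolynomial V ℚ)}
    (hX : IsFrieze mult X) (hacyclic : WellFounded fun u v => mult u v ≠ 0)
    (h₀ : ∀ v, X v 0 =
      algebraMap (MvPolynomial V ℚ) (FractionRing (MvPolynomial V ℚ)) (MvPolynomial.X v))
    (v : V) (j : ℕ) : X v j ≠ 0 :=
  positiveFractions.ne_zero (φ := MvPolynomial.eval (1 : V → ℚ)) <|
    hX.mem_positiveFractions hacyclic
      (fun v => h₀ v ▸ positiveFractions.algebraMap_mem (by simp)) v j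

/-- Reversing an arrow amounts to shifting the sequences on one side of it by one. -/
theorem comp_add {R : Type*} [CommSemiring R] {X : V → ℕ → R} (hX : IsFrieze mult X)
    {mult' : V → V → ℕ} {k : V → ℕ} (hle : ∀ u v, mult u v + mult v u ≤ 1)
    (hmult : ∀ u v, mult' u v + mult' v u = mult u v + mult v u)
    (hk : ∀ u v, mult u v + mult v u = 1 → k v + mult u v = k u + mult' u v) :
    IsFrieze mult' fun v n => X v (n + k v) := fun v j => by
  dsimp only
  rw [Nat.add_right_comm, hX, ← Finset.prod_mul_distrib, ← Finset.prod_mul_distrib]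
  congr 1
  refine Finset.prod_congr rfl fun u _ => ?_
  obtain h | h := Nat.le_one_iff_eq_zero_or_eq_one.mp (hle u v)
  · have h' := hmult u v
    rw [h] at h'
    simp [Nat.add_eq_zero_iff.mp h, Nat.add_eq_zero_iff.mp h']
  · have h' := hmult u v
    have hkuv := hk u v h
    rw [h] at h'
    obtain ⟨h₁, h₂⟩ | ⟨h₁, h₂⟩ := Nat.add_eq_one_iff.mp h <;>
      obtain ⟨h₁', h₂'⟩ | ⟨h₁', h₂'⟩ := Nat.add_eq_one_iff.mp h' <;>
      simp only [h₁, h₂, h₁', h₂', pow_zero, pow_one, one_mul, mul_one] <;> congr 1 <;> omega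

end IsFrieze

section E8

instance decidableRelE8Edge : DecidableRel e8Edge := fun _ _ => inferInstanceAs (Decidable (_ ∨ _))

/-- The quiver with `mult u v` arrows from `u` to `v` is an orientation of `Ẽ_8`. -/
structure IsE8Orientation (mult : Fin 9 → Fin 9 → ℕ) : Prop where
  edge (u v : Fin 9) : e8Edge u v → mult u v + mult v u = 1
  not_edge (u v : Fin 9) : ¬ e8Edge u v → ¬ e8Edge v u → mult u v = 0

/-- No compatibility condition on `f` arises because `Ẽ_8` is a tree. -/
theorem exists_e8_potential (f : Fin 9 → Fin 9 → ℤ) :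
    ∃ φ : Fin 9 → ℤ, ∀ u v : Fin 9, e8Edge u v → φ v = φ u + f u v := by
  let φ₄ := f 0 1 + f 1 2 + f 2 3 + f 3 4
  let φ₈ := φ₄ + f 4 8
  let φ₇ := φ₈ - f 7 8
  refine ⟨![0, f 0 1, f 0 1 + f 1 2, f 0 1 + f 1 2 + f 2 3, φ₄, φ₈ - f 5 8, φ₇ - f 6 7, φ₇, φ₈],
    fun u v huv => ?_⟩
  fin_cases u <;> fin_cases v <;> simp [e8Edge, φ₄, φ₈, φ₇] at huv ⊢

theorem exists_e8_nat_potential (p q : Fin 9 → Fin 9 → ℕ) :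
    ∃ φ : Fin 9 → ℕ, ∀ u v : Fin 9, e8Edge u v → φ v + q u v = φ u + p u v := by
  obtain ⟨φ, hφ⟩ := exists_e8_potential fun u v => p u v - q u v
  obtain ⟨m, hm⟩ := (Set.finite_range φ).bddBelow
  refine ⟨fun v => (φ v - m).toNat, fun u v huv => ?_⟩
  have hu : m ≤ φ u := hm ⟨u, rfl⟩
  have hv : m ≤ φ v := hm ⟨v, rfl⟩
  have huv' := hφ u v huv
  dsimp only at huv' ⊢
  omega

namespace IsE8Orientation

variable {mult mult' : Fin 9 → Fin 9 → ℕ}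

theorem add_swap (h : IsE8Orientation mult) (u v : Fin 9) :
    mult u v + mult v u = if e8Edge u v ∨ e8Edge v u then 1 else 0 := by
  split_ifs with huv
  · exact huv.elim (h.edge u v) fun hvu => add_comm (mult u v) _ ▸ h.edge v u hvu
  · rw [not_or] at huv
    rw [h.not_edge u v huv.1 huv.2, h.not_edge v u huv.2 huv.1]

theorem edge_or_edge_of_ne_zero (h : IsE8Orientation mult) {u v : Fin 9} (huv : mult u v ≠ 0) :
    e8Edge u v ∨ e8Edge v u := by
  by_contra hne
  rw [not_or] at hne
  exact huv (h.not_edge u v hne.1 hne.2)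

theorem wellFounded (h : IsE8Orientation mult) : WellFounded fun u v => mult u v ≠ 0 := by
  obtain ⟨φ, hφ⟩ := exists_e8_nat_potential mult fun u v => mult v u
  refine Subrelation.wf (fun {u v} huv => ?_) (measure φ).wf
  change φ u < φ v
  obtain he | he := h.edge_or_edge_of_ne_zero huv <;>
    linarith [h.edge _ _ he, hφ _ _ he, Nat.pos_of_ne_zero huv]

theorem exists_isFrieze_comp_add {R : Type*} [CommSemiring R] {X : Fin 9 → ℕ → R}
    (h : IsE8Orientation mult) (h' : IsE8Orientation mult') (hX : IsFrieze mult X) :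
    ∃ k : Fin 9 → ℕ, IsFrieze mult' fun v n => X v (n + k v) := by
  obtain ⟨k, hk⟩ := exists_e8_nat_potential mult' mult
  refine ⟨k, hX.comp_add (fun u v => ?_) (fun u v => ?_) fun u v huv => ?_⟩
  · rw [h.add_swap]
    split_ifs <;> simp
  · rw [h.add_swap, h'.add_swap]
  · have huv' := (h'.add_swap u v).trans (h.add_swap u v).symm
    obtain he | he : e8Edge u v ∨ e8Edge v u := by
      by_contra hne
      simp [h.add_swap, hne] at huv
    · exact hk u v he
    · have := hk v u he
      omega

end IsE8Orientation

/-- The orientation of `Ẽ_8` pointing away from the vertex `0`, the end of the long arm. -/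
def e8Outward (u v : Fin 9) : ℕ :=
  if (e8Edge u v ∧ u < 5) ∨ (e8Edge v u ∧ 5 ≤ v) then 1 else 0

theorem isE8Orientation_e8Outward : IsE8Orientation e8Outward :=
  ⟨by decide, by decide⟩

/-- The rows of the frieze pattern along the long arm of `Ẽ_8`, completed as in `IsE8Frieze`. -/
def e8LongArm {R : Type*} [CommSemiring R] (Y : Fin 9 → ℕ → R) : ℕ → ℕ → R
  | 0 => 1
  | 1 => Y 0
  | 2 => Y 1
  | 3 => Y 2
  | 4 => Y 3
  | 5 => Y 4
  | 6 => Y 8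
  | _ => Y 5 * Y 7

namespace IsFrieze

variable {R : Type*} [CommRing R] {Y : Fin 9 → ℕ → R}

theorem isE8Frieze [Nontrivial R] (hY : IsFrieze e8Outward Y) (hne : ∀ v n, Y v n ≠ 0) :
    IsE8Frieze (e8LongArm Y) (Y 5) (Y 7) (Y 6) where
  pattern :=
    { zero _ := rfl
      ne_zero {k} hk n := by
        interval_cases k
        exacts [one_ne_zero, hne 0 n, hne 1 n, hne 2 n, hne 3 n, hne 4 n, hne 8 n]
      diamond {k} hk n := by
        interval_cases k <;>
          simp [e8LongArm, hY _ n, e8Outward, e8Edge, Fin.prod_univ_succ] }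
  x_seven _ := rfl
  z_ne_zero := hne 5
  w_ne_zero := hne 7
  b_ne_zero := hne 6
  z_mul_z n := by simp [e8LongArm, hY 5 n, e8Outward, e8Edge, Fin.prod_univ_succ]
  w_mul_w n := by simp [e8LongArm, hY 7 n, e8Outward, e8Edge, Fin.prod_univ_succ]
  b_mul_b n := by simp [hY 6 n, e8Outward, e8Edge, Fin.prod_univ_succ]

theorem mem_recurrentSequences_of_e8Outward [IsDomain R] (hY : IsFrieze e8Outward Y)
    (hne : ∀ v n, Y v n ≠ 0) (v : Fin 9) : Y v ∈ recurrentSequences R := by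
  have h := hY.isE8Frieze hne
  have hx {k : ℕ} (hk : k ≤ 6) := h.x_mem_recurrentSequences hk
  fin_cases v
  exacts [hx (k := 1) (by norm_num), hx (k := 2) (by norm_num), hx (k := 3) (by norm_num),
    hx (k := 4) (by norm_num), hx (k := 5) (by norm_num), h.z_mem_recurrentSequences,
    h.b_mem_recurrentSequences, h.w_mem_recurrentSequences, hx (k := 6) le_rfl]

end IsFrieze

theorem stmt_4_general {R : Type*} [CommRing R] [IsDomain R] {mult : Fin 9 → Fin 9 → ℕ}
    (hmult : IsE8Orientation mult) {X : Fin 9 → ℕ → R} (hX : IsFrieze mult X)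
    (hne : ∀ v j, X v j ≠ 0) (i : Fin 9) :
    ∃ s : ℕ, 1 ≤ s ∧ ∃ coeff : Fin s → R,
      ∀ j : ℕ, X i (j + s) = ∑ t : Fin s, coeff t * X i (j + t.val) := by
  obtain ⟨k, hY⟩ := hmult.exists_isFrieze_comp_add isE8Orientation_e8Outward hX
  have hYi := hY.mem_recurrentSequences_of_e8Outward (fun v n => hne v (n + k v)) i
  exact exists_recurrence_of_mem_recurrentSequences (mem_recurrentSequences_of_comp_add hYi)

end E8

/-- Let `Q` be any orientation of Ẽ_8, encoded by the arrow multiplicity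
function `mult` : for each edge `{u,v}` there is exactly one arrow between `u` and `v`
(in one of the two directions), and there are no other arrows. Then every frieze
sequence `(X^i_j)_j` in `ℚ(x_1,…,x_9)` satisfies a linear recurrence. -/
theorem stmt_4
    (mult : Fin 9 → Fin 9 → ℕ)   -- number of arrows from `u` to `v`
    (hedge : ∀ u v : Fin 9, e8Edge u.val v.val → mult u v + mult v u = 1)
    (hnonedge : ∀ u v : Fin 9, ¬ e8Edge u.val v.val → ¬ e8Edge v.val u.val → mult u v = 0)
    -- the frieze sequences
    (X : Fin 9 → ℕ → FractionRing (MvPolynomial (Fin 9) ℚ))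
    (hX0 : ∀ v, X v 0 = algebraMap (MvPolynomial (Fin 9) ℚ)
      (FractionRing (MvPolynomial (Fin 9) ℚ)) (MvPolynomial.X v))
    (hXrec : ∀ v (j : ℕ), X v (j+1) * X v j =
      1 + (∏ s : Fin 9, X s (j+1) ^ mult s v) * (∏ d : Fin 9, X d j ^ mult v d)) :
    -- every frieze sequence satisfies a linear recurrence
    ∀ i : Fin 9, ∃ s : ℕ, 1 ≤ s ∧
      ∃ coeff : Fin s → FractionRing (MvPolynomial (Fin 9) ℚ),
        ∀ j : ℕ, X i (j + s) = ∑ t : Fin s, coeff t * X i (j + t.val) :=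
  have hmult : IsE8Orientation mult := ⟨hedge, hnonedge⟩
  stmt_4_general hmult hXrec (IsFrieze.ne_zero_of_initial_eq_X hXrec hmult.wellFounded hX0)
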